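/- arXiv:2511.19224 — 3 statements merged into one kernel-verified Lean document; each statement's English description precedes it below -/
import Mathlib

section
/- Let Ω ⊆ ℂ^q be open, let V be a finite-dimensional complex normed vector space and W a complex Banach space. Let j : Ω → (V →L[ℂ] W) be holomorphic (differentiable over ℂ) such that j(ν) is injective for every ν ∈ Ω, and let f : Ω → W be holomorphic such that f(ν) lies in the range of j(ν) for every ν ∈ Ω. Then the unique map a : Ω → V satisfying f(ν) = j(ν)(a(ν)) for all ν ∈ Ω is holomorphic on Ω. -/
/-- If `j : Ω → Hom(V, W)` is a holomorphic family of injective continuous linear maps,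
`f : Ω → W` is holomorphic with `f ν ∈ range (j ν)` for every `ν ∈ Ω`, then the (unique)
coefficient map `a : Ω → V` with `f ν = j ν (a ν)` is holomorphic on `Ω`. -/
theorem holomorphic_of_eq_apply_injective_family {q : ℕ}
    {V W : Type*} [NormedAddCommGroup V] [NormedSpace ℂ V] [FiniteDimensional ℂ V]
    [NormedAddCommGroup W] [NormedSpace ℂ W] [CompleteSpace W]
    (Ω : Set (Fin q → ℂ)) (hΩ : IsOpen Ω)
    (j : (Fin q → ℂ) → (V →L[ℂ] W)) (hj : DifferentiableOn ℂ j Ω)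
    (hinj : ∀ ν ∈ Ω, Function.Injective (j ν))
    (f : (Fin q → ℂ) → W) (hf : DifferentiableOn ℂ f Ω)
    (hrange : ∀ ν ∈ Ω, f ν ∈ Set.range (j ν))
    (a : (Fin q → ℂ) → V) (ha : ∀ ν ∈ Ω, f ν = j ν (a ν)) :
    DifferentiableOn ℂ a Ω := by
  intro x hx
  have : CompleteSpace V := FiniteDimensional.complete ℂ V
  obtain ⟨L, hL⟩ : (j x).HasLeftInverse :=
    ContinuousLinearMap.HasLeftInverse.of_injective_of_isClosed_range_of_closedComplement_range
      (hinj x hx) (Submodule.closed_of_finiteDimensional (j x).range)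
      (Submodule.ClosedComplemented.of_finiteDimensional (j x).range)
  have hjx : DifferentiableAt ℂ j x := hj.differentiableAt (hΩ.mem_nhds hx)
  have hfx : DifferentiableAt ℂ f x := hf.differentiableAt (hΩ.mem_nhds hx)
  let T : (Fin q → ℂ) → (V →L[ℂ] V) := fun ν => L.comp (j ν)
  have hT : DifferentiableAt ℂ T x := (differentiableAt_const L).clm_comp hjx
  have hTx : T x = 1 := by
    ext v
    exact hL v
  have hu : IsUnit (T x) := by rw [hTx]; exact isUnit_one
  have hinv : DifferentiableAt ℂ (fun ν => Ring.inverse (T ν)) x := hT.inverse hu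
  have hLf : DifferentiableAt ℂ (fun ν => L (f ν)) x := L.differentiableAt.comp x hfx
  have hg : DifferentiableAt ℂ (fun ν => (Ring.inverse (T ν)) (L (f ν))) x :=
    hinv.clm_apply hLf
  have hev : ∀ᶠ ν in nhds x, IsUnit (T ν) :=
    hT.continuousAt.eventually (Units.isOpen.mem_nhds hu)
  refine (hg.congr_of_eventuallyEq ?_).differentiableWithinAt
  filter_upwards [hev, hΩ.mem_nhds hx] with ν h1 h2
  have h3 : L (f ν) = T ν (a ν) := by rw [ha ν h2]; rfl
  have h4 := congrArg (fun A : V →L[ℂ] V => A (a ν)) (Ring.inverse_mul_cancel (T ν) h1)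
  rw [h3]
  exact h4.symm
end

section
/- Let n ≥ 1, let E be a complex Banach space, ε > 0, and T_ε = {ν ∈ ℂⁿ : ‖Re ν‖ < ε}. Let α ∈ ℝⁿ, α ≠ 0, c ∈ ℝ, and define ℓ : ℂⁿ → ℂ by ℓ(ν) = ∑_{j=1}^n α_j ν_j − i c. Let Γ : T_ε → E be holomorphic with Γ(ν) = 0 for every ν ∈ T_ε with ℓ(ν) = 0. Then there exists a holomorphic map Γ̃ : T_ε → E with Γ(ν) = ℓ(ν) Γ̃(ν) for all ν ∈ T_ε. Moreover, if there are C, N > 0 with ‖Γ(ν)‖ ≤ C (1 + ‖ν‖)^N for all ν ∈ T_ε, then there exists C' > 0 with ‖Γ̃(ν)‖ ≤ C' (1 + ‖ν‖)^N for all ν with ‖Re ν‖ < ε/2. -/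
/-- The coordinatewise real part of `ν ∈ ℂⁿ`, as a point of Euclidean `ℝⁿ`. -/
noncomputable def rePart {n : ℕ} (ν : EuclideanSpace ℂ (Fin n)) :
    EuclideanSpace ℝ (Fin n) :=
  (EuclideanSpace.equiv (Fin n) ℝ).symm fun j => (ν j).re

/-- The tube domain `T_ε = {ν ∈ ℂⁿ : ‖Re ν‖ < ε}`. -/
def tubeDomain (n : ℕ) (ε : ℝ) : Set (EuclideanSpace ℂ (Fin n)) :=
  {ν | ‖rePart ν‖ < ε}

open Set Filter Topology Metric MeasureTheory

theorem aux_fderiv_bound {X E : Type*} [NormedAddCommGroup X] [NormedSpace ℂ X]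
    [NormedAddCommGroup E] [NormedSpace ℂ E] {f : X → E} {c : X} {R M : ℝ} (hR : 0 < R)
    (hd : DifferentiableOn ℂ f (ball c R)) (hM : ∀ y ∈ ball c R, ‖f y‖ ≤ M) :
    ‖fderiv ℂ f c‖ ≤ (2 * M) / R := by
  refine Complex.norm_fderiv_le_div_of_mapsTo_ball hd (fun y hy => ?_) hR
  rw [mem_closedBall, dist_eq_norm]
  have h1 := hM y hy
  have h2 := hM c (mem_ball_self hR)
  have := norm_sub_le (f y) (f c)
  linarith

theorem aux_fderiv_cont {X E : Type*} [NormedAddCommGroup X] [NormedSpace ℂ X]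
    [NormedAddCommGroup E] [NormedSpace ℂ E] {f : X → E} {U : Set X} (hU : IsOpen U)
    (hd : DifferentiableOn ℂ f U) : ContinuousOn (fderiv ℂ f) U := by
  intro x hx
  apply ContinuousAt.continuousWithinAt
  have hcx : ContinuousAt f x := (hd.differentiableAt (hU.mem_nhds hx)).continuousAt
  have hbd : ∀ᶠ y in 𝓝 x, ‖f y‖ < ‖f x‖ + 1 :=
    hcx.norm.eventually (gt_mem_nhds (by linarith [norm_nonneg (f x)]))
  obtain ⟨R, hR, hRb⟩ := Metric.eventually_nhds_iff_ball.1 (hbd.and (hU.mem_nhds hx))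
  set M := ‖f x‖ + 1 with hMdef
  have hM0 : 0 ≤ M := by positivity
  set ρ := R / 2 with hρdef
  have hρ : 0 < ρ := by positivity
  have hsub : ∀ y ∈ ball x ρ, ball y ρ ⊆ ball x R := fun y hy =>
    ball_subset_ball' (by have := mem_ball.1 hy; linarith)
  have hL : ∀ y ∈ ball x ρ, ‖fderiv ℂ f y‖ ≤ 2 * M / ρ := fun y hy =>
    aux_fderiv_bound hρ (hd.mono fun z hz => (hRb z (hsub y hy hz)).2)
      fun z hz => (hRb z (hsub y hy hz)).1.le
  have hdiff : ∀ y ∈ ball x R, DifferentiableAt ℂ f y := fun y hy =>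
    hd.differentiableAt (hU.mem_nhds (hRb y hy).2)
  have hlip : ∀ y ∈ ball x ρ, ∀ z ∈ ball x ρ, ‖f z - f y‖ ≤ 2 * M / ρ * ‖z - y‖ := by
    intro y hy z hz
    exact (convex_ball x ρ).norm_image_sub_le_of_norm_fderiv_le (𝕜 := ℂ)
      (fun w hw => hdiff w (ball_subset_ball (by linarith) hw)) hL hy hz
  set L := 2 * M / ρ with hLdef
  refine continuousAt_of_locally_lipschitz (half_pos hρ) (2 * L / (ρ / 2)) ?_
  intro y hy
  set h := y - x with hh
  have hhn : ‖h‖ < ρ / 2 := by rwa [hh, ← dist_eq_norm]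
  have hin : ∀ z ∈ ball x (ρ / 2), z ∈ ball x ρ ∧ z + h ∈ ball x ρ := by
    intro z hz
    rw [mem_ball, dist_eq_norm] at hz
    constructor
    · rw [mem_ball, dist_eq_norm]; linarith
    · rw [mem_ball, dist_eq_norm]
      have := norm_add_le (z - x) h
      rw [show z + h - x = z - x + h by abel]
      linarith
  have hRρ : ball x ρ ⊆ ball x R := ball_subset_ball (by linarith)
  have hg : ∀ z ∈ ball x (ρ / 2), HasFDerivAt (fun z => f (z + h) - f z)
      (fderiv ℂ f (z + h) - fderiv ℂ f z) z := by
    intro z hz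
    have h1 := (hdiff _ (hRρ (hin z hz).2)).hasFDerivAt
    have h2 := (hdiff _ (hRρ (hin z hz).1)).hasFDerivAt
    exact ((hasFDerivAt_comp_add_right h).2 h1).sub h2
  have key := aux_fderiv_bound (f := fun z => f (z + h) - f z) (c := x) (M := L * ‖h‖) (half_pos hρ)
    (fun z hz => (hg z hz).differentiableAt.differentiableWithinAt)
    (fun z hz => by
      have := hlip z (hin z hz).1 (z + h) (hin z hz).2
      simpa using this)
  rw [(hg x (mem_ball_self (half_pos hρ))).fderiv] at key
  rw [dist_eq_norm, dist_eq_norm, ← hh]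
  have : x + h = y := by simp [hh]
  rw [this] at key
  calc _ ≤ _ := key
    _ = _ := by ring

theorem aux_avg {X E : Type*} [NormedAddCommGroup X] [NormedSpace ℂ X] [FiniteDimensional ℂ X]
    [NormedAddCommGroup E] [NormedSpace ℂ E] {f : X → E} {U : Set X}
    (hU : IsOpen U) (hd : DifferentiableOn ℂ f U) (v x₀ : X) (r : ℝ)
    (hK : ∀ θ : ℝ, x₀ + circleMap 0 r θ • v ∈ U) :
    DifferentiableAt ℂ (fun x => Real.circleAverage (fun z : ℂ => f (x + z • v)) 0 r) x₀ := by
  have : ProperSpace X := FiniteDimensional.proper ℂ X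
  set K : Set X := (fun z : ℂ => x₀ + z • v) '' (sphere 0 |r|) with hKdef
  have hKc : IsCompact K := (isCompact_sphere _ _).image (by fun_prop)
  have hKU : K ⊆ U := by
    rw [hKdef, ← range_circleMap]
    rintro _ ⟨_, ⟨θ, rfl⟩, rfl⟩
    exact hK θ
  obtain ⟨δ, hδ, hδU⟩ := hKc.exists_cthickening_subset_open hU hKU
  have hcomp : IsCompact (cthickening δ K) := hKc.cthickening
  have hfc := aux_fderiv_cont hU hd
  obtain ⟨B, hB⟩ := hcomp.exists_bound_of_continuousOn (hfc.mono hδU)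
  have hmem : ∀ x ∈ ball x₀ δ, ∀ θ : ℝ, x + circleMap 0 r θ • v ∈ cthickening δ K := by
    intro x hx θ
    refine mem_cthickening_of_dist_le _ (x₀ + circleMap 0 r θ • v) _ _ ?_ ?_
    · exact ⟨_, circleMap_mem_sphere' _ _ _, rfl⟩
    · simpa using (mem_ball.1 hx).le
  have hpath : ∀ x, Continuous fun θ : ℝ => x + circleMap 0 r θ • v := fun x => by
    have := continuous_circleMap 0 r
    fun_prop
  have hFc : ∀ x ∈ ball x₀ δ, Continuous fun θ : ℝ => f (x + circleMap 0 r θ • v) := fun x hx =>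
    hd.continuousOn.comp_continuous (hpath x) fun θ => hδU (hmem x hx θ)
  have hF'c : Continuous fun θ : ℝ => fderiv ℂ f (x₀ + circleMap 0 r θ • v) :=
    hfc.comp_continuous (hpath x₀) fun θ => hδU (hmem x₀ (mem_ball_self hδ) θ)
  have key := intervalIntegral.hasFDerivAt_integral_of_dominated_of_fderiv_le (𝕜 := ℂ)
    (μ := volume) (a := 0) (b := 2 * Real.pi) (bound := fun _ => B)
    (F := fun x θ => f (x + circleMap 0 r θ • v))
    (F' := fun x θ => fderiv ℂ f (x + circleMap 0 r θ • v)) (x₀ := x₀)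
    (ball_mem_nhds x₀ hδ)
    (by filter_upwards [ball_mem_nhds x₀ hδ] with x hx using (hFc x hx).aestronglyMeasurable)
    ((hFc x₀ (mem_ball_self hδ)).intervalIntegrable _ _)
    hF'c.aestronglyMeasurable
    (Eventually.of_forall fun θ _ x hx => hB _ (hmem x hx θ))
    intervalIntegrable_const
    (Eventually.of_forall fun θ _ x hx =>
      (hasFDerivAt_comp_add_right _).2
        (hd.differentiableAt (hU.mem_nhds (hδU (hmem x hx θ)))).hasFDerivAt)
  simp only [Real.circleAverage_def]
  exact (key.differentiableAt).const_smul _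

theorem aux_div {X E : Type*} [NormedAddCommGroup X] [NormedSpace ℂ X] [FiniteDimensional ℂ X]
    [NormedAddCommGroup E] [NormedSpace ℂ E] [CompleteSpace E] {Γ : X → E} {T : Set X}
    (hT : IsOpen T) (hΓ : DifferentiableOn ℂ Γ T) (L : X →L[ℂ] ℂ) (k : ℂ) (v : X) (hv : L v = 1)
    (h0 : ∀ ν ∈ T, L ν - k = 0 → Γ ν = 0) :
    ∃ Γt : X → E, DifferentiableOn ℂ Γt T ∧ ∀ ν ∈ T, Γ ν = (L ν - k) • Γt ν := by
  classical
  set Γt : X → E := fun ν => if L ν - k = 0 then deriv (fun z : ℂ => Γ (ν + z • v)) 0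
    else (L ν - k)⁻¹ • Γ ν with hΓt
  have hopen : ∀ ν, IsOpen {z : ℂ | ν + z • v ∈ T} := fun ν => hT.preimage (by fun_prop)
  -- holomorphic along lines
  have hline : ∀ ν, DifferentiableOn ℂ (fun z : ℂ => Γt (ν + z • v)) {z : ℂ | ν + z • v ∈ T} := by
    intro ν
    have hg : DifferentiableOn ℂ (fun z : ℂ => Γ (ν + z • v)) {z : ℂ | ν + z • v ∈ T} :=
      hΓ.comp (by fun_prop) fun z hz => hz
    by_cases hc : -(L ν - k) ∈ {z : ℂ | ν + z • v ∈ T}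
    · refine ((Complex.differentiableOn_dslope ((hopen ν).mem_nhds hc)).2 hg).congr ?_
      intro z hz
      simp only [hΓt, map_add, map_smul, hv, smul_eq_mul, mul_one]
      split_ifs with h
      · have hz' : z = -(L ν - k) := by linear_combination h
        rw [← hz', dslope_same]
        have := deriv_comp_const_add (f := fun z : ℂ => Γ (ν + z • v)) z 0
        simp only [add_zero] at this
        rw [← this]
        congr 1
        ext w
        rw [add_smul, add_assoc]
      · have hz' : z ≠ -(L ν - k) := fun h' => h (by rw [h']; ring)
        rw [dslope_of_ne _ hz', slope_def_module]
        have : Γ (ν + (-(L ν - k)) • v) = 0 := h0 _ hc (by simp [hv])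
        rw [this, sub_zero]
        congr 2
        ring
    · have hne : ∀ z ∈ {z : ℂ | ν + z • v ∈ T}, L ν + z - k ≠ 0 := by
        intro z hz h
        apply hc
        have hz' : -(L ν - k) = z := by linear_combination -h
        rw [hz']; exact hz
      have : DifferentiableOn ℂ (fun z : ℂ => (L ν + z - k)⁻¹ • Γ (ν + z • v))
          {z : ℂ | ν + z • v ∈ T} :=
        DifferentiableOn.smul (DifferentiableOn.inv (by fun_prop) hne) hg
      refine this.congr ?_
      intro z hz
      simp only [hΓt, map_add, map_smul, hv, smul_eq_mul, mul_one]
      rw [if_neg (hne z hz)]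
  set U : Set X := T ∩ {ν | L ν - k ≠ 0} with hUdef
  have hU : IsOpen U := hT.inter (isOpen_ne_fun (by fun_prop) (by fun_prop))
  have hdU : DifferentiableOn ℂ Γt U := by
    have : DifferentiableOn ℂ (fun ν => (L ν - k)⁻¹ • Γ ν) U :=
      DifferentiableOn.smul (DifferentiableOn.inv (by fun_prop) fun ν hν => hν.2)
        (hΓ.mono inter_subset_left)
    exact this.congr fun ν hν => by simp only [hΓt]; rw [if_neg hν.2]
  refine ⟨Γt, ?_, ?_⟩
  · intro ν₀ hν₀
    by_cases hl : L ν₀ - k = 0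
    swap
    · exact (hdU.differentiableAt (hU.mem_nhds ⟨hν₀, hl⟩)).differentiableWithinAt
    have hcont : Continuous fun p : X × ℂ => p.1 + p.2 • v := by fun_prop
    have hnh : (fun p : X × ℂ => p.1 + p.2 • v) ⁻¹' T ∈ 𝓝 (ν₀, (0 : ℂ)) :=
      (hT.preimage hcont).mem_nhds (by simpa using hν₀)
    obtain ⟨δ, hδ, hsub⟩ := Metric.mem_nhds_iff.1 hnh
    have hin : ∀ ν ∈ ball ν₀ δ, ∀ z ∈ ball (0 : ℂ) δ, ν + z • v ∈ T := by
      intro ν hν z hz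
      exact hsub (show (ν, z) ∈ ball (ν₀, (0 : ℂ)) δ by
        rw [← ball_prod_same]; exact ⟨hν, hz⟩)
    have hr : 0 < δ / 2 := half_pos hδ
    have havg := aux_avg hU hdU v ν₀ (δ / 2) (by
      intro θ
      refine ⟨hin ν₀ (mem_ball_self hδ) _ ?_, ?_⟩
      · have := circleMap_mem_sphere 0 hr.le θ
        rw [mem_sphere] at this
        rw [mem_ball]; linarith
      · have := circleMap_ne_center (c := 0) (θ := θ) hr.ne'
        simp only [mem_ofPred_eq, map_add, map_smul, hv, smul_eq_mul, mul_one]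
        intro h
        exact this (by linear_combination h - hl))
    refine (havg.congr_of_eventuallyEq ?_).differentiableWithinAt
    filter_upwards [ball_mem_nhds ν₀ hδ] with ν hν
    have hcb : closedBall (0 : ℂ) |δ / 2| ⊆ {z : ℂ | ν + z • v ∈ T} := by
      intro z hz
      rw [abs_of_pos hr] at hz
      exact hin ν hν z (closedBall_subset_ball (by linarith) hz)
    have := circleAverage_of_differentiable_on_off_countable (f := fun z : ℂ => Γt (ν + z • v))
      (c := 0) (R := δ / 2) countable_empty ((hline ν).continuousOn.mono hcb)
      (fun z hz => (hline ν).differentiableAt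
        ((hopen ν).mem_nhds (hcb (ball_subset_closedBall hz.1))))
    rw [this]; simp
  · intro ν hν
    by_cases hl : L ν - k = 0
    · rw [h0 ν hν hl, hl, zero_smul]
    · simp only [hΓt]
      rw [if_neg hl, smul_smul, mul_inv_cancel₀ hl, one_smul]

theorem rePart_add_le {n : ℕ} (ν μ : EuclideanSpace ℂ (Fin n)) :
    ‖rePart (ν + μ)‖ ≤ ‖rePart ν‖ + ‖μ‖ := by
  have h1 : rePart (ν + μ) = rePart ν + rePart μ := by
    ext j; simp [rePart]
  have h2 : ‖rePart μ‖ ≤ ‖μ‖ := by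
    rw [EuclideanSpace.norm_eq, EuclideanSpace.norm_eq]
    refine Real.sqrt_le_sqrt (Finset.sum_le_sum fun j _ => ?_)
    have : ‖(rePart μ) j‖ ≤ ‖μ j‖ := by
      simpa [rePart] using Complex.abs_re_le_norm (μ j)
    gcongr
  rw [h1]
  exact (norm_add_le _ _).trans (by gcongr)

theorem isOpen_tube (n : ℕ) (ε : ℝ) : IsOpen (tubeDomain n ε) := by
  have : Continuous (rePart (n := n)) := by
    unfold rePart
    refine (EuclideanSpace.equiv (Fin n) ℝ).symm.continuous.comp ?_
    fun_prop
  exact isOpen_lt this.norm continuous_const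

/-- Division of a holomorphic function on a tube domain by the affine linear factor
`ℓ(ν) = ∑ⱼ αⱼ νⱼ − i c` on whose zero set it vanishes, with preservation of
polynomial growth on the half-size tube. -/
theorem div_linear_factor_on_tube {n : ℕ} (hn : 1 ≤ n)
    {E : Type*} [NormedAddCommGroup E] [NormedSpace ℂ E] [CompleteSpace E]
    (ε : ℝ) (hε : 0 < ε) (α : Fin n → ℝ) (hα : α ≠ 0) (c : ℝ)
    (Γ : EuclideanSpace ℂ (Fin n) → E)
    (hΓ : DifferentiableOn ℂ Γ (tubeDomain n ε))
    (hvanish : ∀ ν ∈ tubeDomain n ε,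
      (∑ j, (α j : ℂ) * ν j) - Complex.I * (c : ℂ) = 0 → Γ ν = 0) :
    ∃ Γt : EuclideanSpace ℂ (Fin n) → E,
      DifferentiableOn ℂ Γt (tubeDomain n ε) ∧
      (∀ ν ∈ tubeDomain n ε,
        Γ ν = ((∑ j, (α j : ℂ) * ν j) - Complex.I * (c : ℂ)) • Γt ν) ∧
      ∀ C N : ℝ, 0 < C → 0 < N →
        (∀ ν ∈ tubeDomain n ε, ‖Γ ν‖ ≤ C * (1 + ‖ν‖) ^ N) →
        ∃ C' > 0, ∀ ν : EuclideanSpace ℂ (Fin n), ‖rePart ν‖ < ε / 2 →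
          ‖Γt ν‖ ≤ C' * (1 + ‖ν‖) ^ N := by
  set S : ℝ := ∑ j, α j ^ 2 with hS
  have hSpos : 0 < S := by
    obtain ⟨j, hj⟩ := Function.ne_iff.1 hα
    exact Finset.sum_pos' (fun i _ => sq_nonneg _) ⟨j, Finset.mem_univ _, by
      have : α j ≠ 0 := hj
      positivity⟩
  set v : EuclideanSpace ℂ (Fin n) := WithLp.toLp 2 fun j => ((α j / S : ℝ) : ℂ) with hvdef
  set L : EuclideanSpace ℂ (Fin n) →L[ℂ] ℂ :=
    ∑ j, (α j : ℂ) • (EuclideanSpace.proj j : EuclideanSpace ℂ (Fin n) →L[ℂ] ℂ) with hLdef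
  have hL : ∀ ν, L ν = ∑ j, (α j : ℂ) * ν j := by
    intro ν
    simp [hLdef]
  have hLv : L v = 1 := by
    rw [hL]
    have : ∑ j, α j * (α j / S) = 1 := by
      rw [← div_self hSpos.ne']
      nth_rewrite 2 [hS]
      rw [Finset.sum_div]
      exact Finset.sum_congr rfl fun j _ => by ring
    simp only [hvdef]
    exact_mod_cast this
  simp only [← hL] at hvanish ⊢
  obtain ⟨Γt, hd, hdiv⟩ := aux_div (isOpen_tube n ε) hΓ L (Complex.I * (c : ℂ)) v hLv hvanish
  refine ⟨Γt, hd, hdiv, ?_⟩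
  intro C N hC hN hbd
  have hv0 : 0 < ‖v‖ := by
    rw [norm_pos_iff]
    rintro h
    rw [h] at hLv
    simp at hLv
  set r : ℝ := ε / 2 / ‖v‖ / 2 with hr
  have hr0 : 0 < r := by positivity
  have hrv : r * ‖v‖ = ε / 4 := by
    rw [hr]; field_simp; norm_num
  -- pointwise bound where the factor is not small
  have hbig : ∀ ν ∈ tubeDomain n ε, r / 2 ≤ ‖L ν - Complex.I * (c : ℂ)‖ →
      ‖Γt ν‖ ≤ 2 / r * (C * (1 + ‖ν‖) ^ N) := by
    intro ν hν hl
    have h1 := hbd ν hν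
    rw [hdiv ν hν, norm_smul] at h1
    have h2 : r / 2 * ‖Γt ν‖ ≤ C * (1 + ‖ν‖) ^ N :=
      (mul_le_mul_of_nonneg_right hl (norm_nonneg _)).trans h1
    calc ‖Γt ν‖ = 2 / r * (r / 2 * ‖Γt ν‖) := by field_simp
      _ ≤ _ := by gcongr
  refine ⟨2 / r * C * (1 + r * ‖v‖) ^ N, by positivity, ?_⟩
  intro ν hν
  have hin : ∀ z ∈ Metric.closedBall (0 : ℂ) r, ν + z • v ∈ tubeDomain n ε ∧
      2 / r * (C * (1 + ‖ν + z • v‖) ^ N) ≤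
        2 / r * C * (1 + r * ‖v‖) ^ N * (1 + ‖ν‖) ^ N := by
    intro z hz
    rw [mem_closedBall_zero_iff] at hz
    have hzv : ‖z • v‖ ≤ r * ‖v‖ := by rw [norm_smul]; gcongr
    constructor
    · have := rePart_add_le ν (z • v)
      show ‖rePart (ν + z • v)‖ < ε
      linarith
    · rw [mul_assoc, mul_assoc, ← Real.mul_rpow (by positivity) (by positivity)]
      have h3 : 1 + ‖ν + z • v‖ ≤ (1 + r * ‖v‖) * (1 + ‖ν‖) := by
        have := norm_add_le ν (z • v)
        have : 0 ≤ r * ‖v‖ * ‖ν‖ := by positivity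
        linarith
      gcongr
  have h00 := hin 0 (by simp [hr0.le])
  simp only [zero_smul, add_zero] at h00
  by_cases hl : r / 2 ≤ ‖L ν - Complex.I * (c : ℂ)‖
  · exact (hbig ν h00.1 hl).trans h00.2
  · push Not at hl
    have hdz : DifferentiableOn ℂ (fun z : ℂ => Γt (ν + z • v)) (closedBall 0 r) :=
      hd.comp (by fun_prop) fun z hz => (hin z hz).1
    have := Complex.norm_le_of_forall_mem_frontier_norm_le (U := ball (0 : ℂ) r)
      (f := fun z : ℂ => Γt (ν + z • v)) (z := 0) isBounded_ball
      (DifferentiableOn.diffContOnCl (by rwa [closure_ball _ hr0.ne']))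
      (C := 2 / r * C * (1 + r * ‖v‖) ^ N * (1 + ‖ν‖) ^ N) (by
        intro z hz
        rw [frontier_ball _ hr0.ne'] at hz
        have hz1 := hin z (sphere_subset_closedBall hz)
        refine (hbig _ hz1.1 ?_).trans hz1.2
        rw [mem_sphere_zero_iff_norm] at hz
        rw [map_add, map_smul, hLv, smul_eq_mul, mul_one]
        have := norm_sub_le (L ν + z - Complex.I * (c : ℂ)) (L ν - Complex.I * (c : ℂ))
        rw [show L ν + z - Complex.I * (c : ℂ) - (L ν - Complex.I * (c : ℂ)) = z by ring] at this
        linarith)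
      (subset_closure (mem_ball_self hr0))
    simpa using this
end

section
/- Let n ≥ 1 and let C ⊆ ℝⁿ be a compact convex polyhedral set with nonempty interior. Then: (i) C has only finitely many hyperplane facets; (ii) the topological boundary ∂C equals the union, over all hyperplane facets σ of C, of the closed facets C ∩ σ; (iii) if σ₁ and σ₂ are distinct hyperplane facets of C, then the interior of C ∩ σ₁ relative to σ₁ and the interior of C ∩ σ₂ relative to σ₂ are disjoint. -/
open MeasureTheory
open scoped InnerProductSpace

/-- A polyhedral set: a finite intersection of closed half-spaces. -/
def IsPolyhedral {n : ℕ} (C : Set (EuclideanSpace ℝ (Fin n))) : Prop :=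
  ∃ S : Finset (EuclideanSpace ℝ (Fin n) × ℝ),
    (∀ p ∈ S, p.1 ≠ 0) ∧ C = ⋂ p ∈ S, {x | ⟪p.1, x⟫_ℝ ≤ p.2}

/-- The affine hyperplane with normal vector `p.1` and offset `p.2`. -/
def hyperplaneOf {n : ℕ} (p : EuclideanSpace ℝ (Fin n) × ℝ) :
    Set (EuclideanSpace ℝ (Fin n)) :=
  {x | ⟪p.1, x⟫_ℝ = p.2}

/-- `p = (ν, c)` describes a hyperplane facet of `C` with outward unit normal `ν`:
`ν` is a unit vector, `C` is contained in the half-space `⟪ν, ·⟫ ≤ c` and in no other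
closed half-space bounded by the hyperplane, and `C ∩ σ` has nonempty interior relative
to the hyperplane `σ = {⟪ν, ·⟫ = c}`. -/
def IsFacet {n : ℕ} (C : Set (EuclideanSpace ℝ (Fin n)))
    (p : EuclideanSpace ℝ (Fin n) × ℝ) : Prop :=
  ‖p.1‖ = 1 ∧ C ⊆ {x | ⟪p.1, x⟫_ℝ ≤ p.2} ∧ ¬ (C ⊆ {x | p.2 ≤ ⟪p.1, x⟫_ℝ}) ∧
    ∃ x ∈ hyperplaneOf p, ∃ ε > 0, Metric.ball x ε ∩ hyperplaneOf p ⊆ C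

/-- The interior of the closed facet `C ∩ σ` relative to the hyperplane `σ`
described by `p`. -/
def facetRelInterior {n : ℕ} (C : Set (EuclideanSpace ℝ (Fin n)))
    (p : EuclideanSpace ℝ (Fin n) × ℝ) : Set (EuclideanSpace ℝ (Fin n)) :=
  {x | x ∈ hyperplaneOf p ∧ ∃ ε > 0, Metric.ball x ε ∩ hyperplaneOf p ⊆ C}

theorem aux_dir {n : ℕ} (p q : EuclideanSpace ℝ (Fin n) × ℝ) (hp : ‖p.1‖ = 1) (hq : ‖q.1‖ = 1)
    (z y : EuclideanSpace ℝ (Fin n)) (hzp : ⟪p.1, z⟫_ℝ < p.2) (hzq : ⟪q.1, z⟫_ℝ < q.2)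
    (hyp : ⟪p.1, y⟫_ℝ = p.2) (hyq : ⟪q.1, y⟫_ℝ = q.2) (hne : p ≠ q) :
    ∃ v : EuclideanSpace ℝ (Fin n), ⟪p.1, v⟫_ℝ = 0 ∧ 0 < ⟪q.1, v⟫_ℝ := by
  have hpp : ⟪p.1, p.1⟫_ℝ = 1 := by rw [real_inner_self_eq_norm_sq, hp]; norm_num
  set c : ℝ := ⟪p.1, q.1⟫_ℝ with hc
  have hpv : ⟪p.1, q.1 - c • p.1⟫_ℝ = 0 := by
    rw [inner_sub_right, inner_smul_right, hpp, ← hc]; ring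
  by_cases hv : q.1 - c • p.1 = 0
  · exfalso
    have h1 : q.1 = c • p.1 := sub_eq_zero.mp hv
    have h2 : |c| = 1 := by
      have := hq
      rw [h1, norm_smul, hp, mul_one, Real.norm_eq_abs] at this
      exact this
    rw [h1, inner_smul_left] at hyq hzq
    simp only [conj_trivial] at hyq hzq
    rw [hyp] at hyq
    have h3 : c = 1 := by
      rcases eq_or_eq_neg_of_abs_eq h2 with h | h
      · exact h
      · rw [h] at hyq hzq; linarith
    apply hne
    rw [h3, one_smul] at h1
    rw [h3, one_mul] at hyq
    exact Prod.ext h1.symm hyq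
  · refine ⟨q.1 - c • p.1, hpv, ?_⟩
    have h : ⟪q.1, q.1 - c • p.1⟫_ℝ = ⟪q.1 - c • p.1, q.1 - c • p.1⟫_ℝ := by
      conv_rhs => rw [inner_sub_left, inner_smul_left, hpv]
      simp
    rw [h]
    exact real_inner_self_pos.mpr hv

theorem aux_move {n : ℕ} (U : Set (EuclideanSpace ℝ (Fin n))) (hU : IsOpen U)
    (y v : EuclideanSpace ℝ (Fin n)) (hy : y ∈ U) : ∃ t : ℝ, 0 < t ∧ y + t • v ∈ U := by
  have hc : Continuous (fun t : ℝ => y + t • v) := by fun_prop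
  have h0 : ∀ᶠ t in nhds (0 : ℝ), y + t • v ∈ U :=
    (hU.preimage hc).mem_nhds (by simpa using hy)
  have h1 : ∀ᶠ t in nhdsWithin (0 : ℝ) (Set.Ioi 0), y + t • v ∈ U :=
    h0.filter_mono nhdsWithin_le_nhds
  obtain ⟨t, ht, ht'⟩ := (h1.and self_mem_nhdsWithin).exists
  exact ⟨t, ht', ht⟩

theorem aux_strict {n : ℕ} (C : Set (EuclideanSpace ℝ (Fin n)))
    (p : EuclideanSpace ℝ (Fin n) × ℝ) (hp : ‖p.1‖ = 1) (hC : C ⊆ {x | ⟪p.1, x⟫_ℝ ≤ p.2})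
    (x : EuclideanSpace ℝ (Fin n)) (hx : x ∈ interior C) : ⟪p.1, x⟫_ℝ < p.2 := by
  obtain ⟨t, ht, h⟩ := aux_move _ isOpen_interior x p.1 hx
  have h1 := hC (interior_subset h)
  simp only [Set.mem_setOf_eq, inner_add_right, inner_smul_right, real_inner_self_eq_norm_sq,
    hp] at h1
  linarith

theorem aux_open {n : ℕ} (T : Finset (EuclideanSpace ℝ (Fin n) × ℝ)) :
    IsOpen {x | ∀ q ∈ T, ⟪q.1, x⟫_ℝ < q.2} := by
  have : {x | ∀ q ∈ T, ⟪q.1, x⟫_ℝ < q.2} = ⋂ q ∈ T, {x | ⟪q.1, x⟫_ℝ < q.2} := by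
    ext x; simp
  rw [this]
  refine isOpen_biInter_finset fun q _ => isOpen_lt (by fun_prop) (by fun_prop)

theorem aux_generic {n : ℕ} (p : EuclideanSpace ℝ (Fin n) × ℝ) (hp : ‖p.1‖ = 1)
    (z : EuclideanSpace ℝ (Fin n)) (hzp : ⟪p.1, z⟫_ℝ < p.2)
    (U : Set (EuclideanSpace ℝ (Fin n))) (hU : IsOpen U)
    (x : EuclideanSpace ℝ (Fin n)) (hxU : x ∈ U) (hx : ⟪p.1, x⟫_ℝ = p.2)
    (T : Finset (EuclideanSpace ℝ (Fin n) × ℝ)) :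
    (∀ q ∈ T, ‖q.1‖ = 1 ∧ ⟪q.1, z⟫_ℝ < q.2 ∧ p ≠ q) →
    ∃ y ∈ U, ⟪p.1, y⟫_ℝ = p.2 ∧ ∀ q ∈ T, ⟪q.1, y⟫_ℝ ≠ q.2 := by
  classical
  induction T using Finset.induction_on with
  | empty => intro _; exact ⟨x, hxU, hx, by simp⟩
  | insert q T _ ih =>
    intro h
    obtain ⟨y, hyU, hyp, hyT⟩ := ih fun r hr => h r (Finset.mem_insert_of_mem hr)
    by_cases hyq : ⟪q.1, y⟫_ℝ = q.2
    · obtain ⟨hq, hzq, hne⟩ := h q (Finset.mem_insert_self _ _)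
      obtain ⟨v, hv0, hv1⟩ := aux_dir p q hp hq z y hzp hzq hyp hyq hne
      have hO : IsOpen (U ∩ ⋂ r ∈ T, {w | ⟪r.1, w⟫_ℝ ≠ r.2}) :=
        hU.inter (isOpen_biInter_finset fun r _ => isOpen_ne_fun (by fun_prop) (by fun_prop))
      obtain ⟨t, ht, hm⟩ := aux_move _ hO y v ⟨hyU, by simpa using hyT⟩
      refine ⟨y + t • v, hm.1, by rw [inner_add_right, inner_smul_right, hv0, hyp]; ring, ?_⟩
      intro r hr
      rcases Finset.mem_insert.mp hr with rfl | hr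
      · rw [inner_add_right, inner_smul_right, hyq]
        have := mul_pos ht hv1
        linarith
      · have h2 := hm.2
        simp only [Set.mem_iInter] at h2
        exact h2 r hr
    · refine ⟨y, hyU, hyp, ?_⟩
      intro r hr
      rcases Finset.mem_insert.mp hr with rfl | hr
      · exact hyq
      · exact hyT r hr

/-- An irredundant description with unit normals. -/
theorem aux_minimal {n : ℕ} (C : Set (EuclideanSpace ℝ (Fin n))) (h : IsPolyhedral C) :
    ∃ T : Finset (EuclideanSpace ℝ (Fin n) × ℝ), (∀ q ∈ T, ‖q.1‖ = 1) ∧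
      (C = {x | ∀ q ∈ T, ⟪q.1, x⟫_ℝ ≤ q.2}) ∧
      ∀ q ∈ T, ∃ z, q.2 < ⟪q.1, z⟫_ℝ ∧ ∀ r ∈ T, r ≠ q → ⟪r.1, z⟫_ℝ ≤ r.2 := by
  classical
  obtain ⟨S, hS, hC⟩ := h
  let P : Set (Finset (EuclideanSpace ℝ (Fin n) × ℝ)) :=
    {T | (∀ q ∈ T, ‖q.1‖ = 1) ∧ (C = {x | ∀ q ∈ T, ⟪q.1, x⟫_ℝ ≤ q.2})}
  have hne : P.Nonempty := by
    refine ⟨S.image fun q => (‖q.1‖⁻¹ • q.1, ‖q.1‖⁻¹ * q.2), ?_, ?_⟩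
    · intro q hq
      obtain ⟨r, hr, rfl⟩ := Finset.mem_image.mp hq
      exact norm_smul_inv_norm (𝕜 := ℝ) (hS r hr)
    · rw [hC]
      ext x
      simp only [Set.mem_iInter, Set.mem_setOf_eq, Finset.forall_mem_image]
      refine forall₂_congr fun r hr => ?_
      have : 0 < ‖r.1‖⁻¹ := inv_pos.mpr (norm_pos_iff.mpr (hS r hr))
      rw [inner_smul_left, conj_trivial, mul_le_mul_iff_right₀ this]
  obtain ⟨T, ⟨hT1, hT2⟩, hmin⟩ := wellFounded_lt.has_min P hne
  refine ⟨T, hT1, hT2, ?_⟩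
  intro q hq
  by_contra hcon
  push Not at hcon
  refine hmin (T.erase q) ⟨fun r hr => hT1 r (Finset.mem_of_mem_erase hr), ?_⟩
    (Finset.erase_ssubset hq)
  rw [hT2]
  ext x
  simp only [Set.mem_setOf_eq]
  constructor
  · intro h r hr
    exact h r (Finset.mem_of_mem_erase hr)
  · intro h r hr
    have hq' : ⟪q.1, x⟫_ℝ ≤ q.2 := by
      by_contra hlt
      obtain ⟨s, hs, hsq, hlt⟩ := hcon x (not_le.mp hlt)
      exact absurd (h s (Finset.mem_erase.mpr ⟨hsq, hs⟩)) (not_le.mpr hlt)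
    by_cases hrq : r = q
    · rw [hrq]; exact hq'
    · exact h r (Finset.mem_erase.mpr ⟨hrq, hr⟩)

/-- For a compact convex polyhedral set `C` with nonempty interior:
(i) `C` has only finitely many hyperplane facets;
(ii) the topological boundary of `C` is the union of its closed facets;
(iii) the relative interiors of distinct facets are disjoint. -/
theorem facets_of_compact_polyhedral {n : ℕ} (hn : 1 ≤ n)
    (C : Set (EuclideanSpace ℝ (Fin n)))
    (hCcompact : IsCompact C) (hCconv : Convex ℝ C) (hCpoly : IsPolyhedral C)
    (hCint : (interior C).Nonempty) :
    {p : EuclideanSpace ℝ (Fin n) × ℝ | IsFacet C p}.Finite ∧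
    (frontier C = ⋃ p ∈ {p : EuclideanSpace ℝ (Fin n) × ℝ | IsFacet C p}, C ∩ hyperplaneOf p) ∧
    (∀ p₁ p₂ : EuclideanSpace ℝ (Fin n) × ℝ, IsFacet C p₁ → IsFacet C p₂ →
      hyperplaneOf p₁ ≠ hyperplaneOf p₂ →
      Disjoint (facetRelInterior C p₁) (facetRelInterior C p₂)) := by
  classical
  obtain ⟨T, hT1, hT2, hTmin⟩ := aux_minimal C hCpoly
  obtain ⟨x0, hx0⟩ := hCint
  have hTC : ∀ q ∈ T, C ⊆ {x | ⟪q.1, x⟫_ℝ ≤ q.2} := by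
    intro q hq x hx
    rw [hT2] at hx
    exact hx q hq
  have hx0T : ∀ q ∈ T, ⟪q.1, x0⟫_ℝ < q.2 := fun q hq =>
    aux_strict C q (hT1 q hq) (hTC q hq) x0 hx0
  have hOC : {x | ∀ q ∈ T, ⟪q.1, x⟫_ℝ < q.2} ⊆ interior C := by
    refine interior_maximal ?_ (aux_open T)
    intro x hx
    rw [hT2]
    exact fun q hq => (hx q hq).le
  have hfacT : ∀ p, IsFacet C p → p ∈ T := by
    rintro p ⟨hp, hpC, -, x, hx, ε, hε, hb⟩
    by_contra hpT
    obtain ⟨y, hyU, hyp, hyT⟩ := aux_generic p hp x0 (aux_strict C p hp hpC x0 hx0)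
      (Metric.ball x ε) Metric.isOpen_ball x (Metric.mem_ball_self hε) hx T
      (fun q hq => ⟨hT1 q hq, hx0T q hq, fun h => hpT (h ▸ hq)⟩)
    have hyC : y ∈ C := hb ⟨hyU, hyp⟩
    have := aux_strict C p hp hpC y (hOC fun q hq => lt_of_le_of_ne (hTC q hq hyC) (hyT q hq))
    linarith
  have hTfac : ∀ p ∈ T, IsFacet C p := by
    intro p hp
    refine ⟨hT1 p hp, hTC p hp, ?_, ?_⟩
    · intro h
      have h1 := h (interior_subset hx0)
      have h2 := hx0T p hp
      simp only [Set.mem_setOf_eq] at h1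
      linarith
    · obtain ⟨z, hz, hzT⟩ := hTmin p hp
      have h0 := hx0T p hp
      set a := ⟪p.1, x0⟫_ℝ with ha
      set b := ⟪p.1, z⟫_ℝ with hb
      have hab : 0 < b - a := by linarith
      set s := (p.2 - a) / (b - a) with hs
      have hs0 : 0 < s := div_pos (by linarith) hab
      have hs1 : s < 1 := (div_lt_one hab).mpr (by linarith)
      have hsm : s * (b - a) = p.2 - a := div_mul_cancel₀ _ hab.ne'
      have hw : ⟪p.1, (1 - s) • x0 + s • z⟫_ℝ = p.2 := by
        rw [inner_add_right, inner_smul_right, inner_smul_right, ← ha, ← hb]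
        linarith
      have hwT : (1 - s) • x0 + s • z ∈ {x | ∀ q ∈ T.erase p, ⟪q.1, x⟫_ℝ < q.2} := by
        intro q hq
        obtain ⟨hqp, hqT⟩ := Finset.mem_erase.mp hq
        rw [inner_add_right, inner_smul_right, inner_smul_right]
        have e1 := mul_lt_mul_of_pos_left (hx0T q hqT) (by linarith : 0 < 1 - s)
        have e2 := mul_le_mul_of_nonneg_left (hzT q hqT hqp) hs0.le
        linarith
      obtain ⟨ε, hε, hball⟩ := Metric.isOpen_iff.mp (aux_open (T.erase p)) _ hwT
      refine ⟨_, hw, ε, hε, ?_⟩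
      rintro y ⟨hy1, hy2⟩
      rw [hT2]
      intro q hq
      by_cases hqp : q = p
      · rw [hqp]; exact le_of_eq hy2
      · exact (hball hy1 q (Finset.mem_erase.mpr ⟨hqp, hq⟩)).le
  refine ⟨T.finite_toSet.subset fun p hp => hfacT p hp, ?_, ?_⟩
  · rw [hCcompact.isClosed.frontier_eq]
    ext x
    simp only [Set.mem_diff, Set.mem_iUnion, Set.mem_setOf_eq, Set.mem_inter_iff, exists_prop]
    constructor
    · rintro ⟨hxC, hxi⟩
      by_contra hcon
      push Not at hcon
      exact hxi (hOC fun q hq => lt_of_le_of_ne (hTC q hq hxC) (hcon q (hTfac q hq) hxC))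
    · rintro ⟨p, hp, hxC, hxp⟩
      refine ⟨hxC, fun hxi => ?_⟩
      exact absurd hxp (aux_strict C p hp.1 hp.2.1 x hxi).ne
  · intro p q hp hq hne
    rw [Set.disjoint_left]
    rintro y ⟨hyp, ε, hε, hb⟩ ⟨hyq, -⟩
    obtain ⟨v, hv0, hv1⟩ := aux_dir p q hp.1 hq.1 x0 y (aux_strict C p hp.1 hp.2.1 x0 hx0)
      (aux_strict C q hq.1 hq.2.1 x0 hx0) hyp hyq (fun h => hne (by rw [h]))
    obtain ⟨t, ht, hm⟩ := aux_move _ Metric.isOpen_ball y v (Metric.mem_ball_self hε)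
    have hC : y + t • v ∈ C := by
      refine hb ⟨hm, ?_⟩
      change ⟪p.1, y + t • v⟫_ℝ = p.2
      rw [inner_add_right, inner_smul_right, hv0, hyp]; ring
    have h1 := hq.2.1 hC
    change ⟪q.1, y + t • v⟫_ℝ ≤ q.2 at h1
    rw [inner_add_right, inner_smul_right, hyq] at h1
    have := mul_pos ht hv1
    linarith
end
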